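/- Assume: (A1) E U⁺(·, V_T^{1,φ}) < ∞ for all φ ∈ Φ(U,1); (A2) Φ(U,1) = Φ(1); (A3) asymptotic elasticity: there exist γ̄ ≥ 0, K > 0 and ℱ-measurable C : Ω → [0,∞) with E C < ∞ such that U(ω, λx) ≤ K λ^{γ̄}( U(ω, x + 1/2) + C(ω) ) for all ω ∈ Ω, λ ≥ 1, x ∈ ℝ. Then for every x ≥ 0 and every φ ∈ Φ(x) one has E U⁺(·, V_T^{x,φ}) < ∞; in particular Φ(U,x) = Φ(x). -/

import Mathlib

/-!
The theorem is a scaling argument. Given `φ ∈ Φ(x)`, put `λ = 2x + 1 ≥ 1` and `ψ = φ / λ`.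
Wealth is affine in the strategy (`Vval_smul`), so `V^{1,ψ} = 1 + (V^{x,φ} - x) / λ`. Since
`x / λ ≤ 1/2`, this gives `V^{x,φ} / λ + 1/2 ≤ V^{1,ψ}`; in particular `ψ ∈ Φ(1)`, so that
`E U⁺(V^{1,ψ}) < ∞` by (A2) and (A1). Asymptotic elasticity at the point `V^{x,φ} / λ`, together
with monotonicity of `U`, yields `U(V^{x,φ}) ≤ K λ^γ (U(V^{1,ψ}) + C)`, and passing to positive
parts and integrating bounds `E U⁺(V^{x,φ})` by a finite quantity.
-/

open MeasureTheory ProbabilityTheory Set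
open scoped ENNReal InnerProductSpace

noncomputable section

/-- `d`-dimensional Euclidean space `ℝ^d`. -/
abbrev Evec (d : ℕ) : Type := EuclideanSpace ℝ (Fin d)

/-- The history space `Ω^t = Ω_1 × ⋯ × Ω_t` (with `Ω^0` a one-point space). -/
def Hist (Ωs : ℕ → Type) : ℕ → Type
  | 0 => PUnit
  | t + 1 => Hist Ωs t × Ωs (t + 1)

/-- The product σ-algebra `ℱ_t = 𝒢_1 ⊗ ⋯ ⊗ 𝒢_t` on `Ω^t`. -/
instance histMS (Ωs : ℕ → Type) [m : ∀ t, MeasurableSpace (Ωs t)] :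
    ∀ t, MeasurableSpace (Hist Ωs t)
  | 0 => inferInstanceAs (MeasurableSpace PUnit)
  | t + 1 => @Prod.instMeasurableSpace _ _ (histMS Ωs t) (m (t + 1))

variable {Ωs : ℕ → Type} [∀ t, MeasurableSpace (Ωs t)] {d : ℕ}

/-- The measures `P_t` on `Ω^t` obtained by iterated integration of the kernels
`q_{s+1}` (here `q 0` applied to the unique point of `Ω^0` plays the role of `P_1`). -/
def Pmes (q : ∀ t, Kernel (Hist Ωs t) (Ωs (t + 1))) : ∀ t, Measure (Hist Ωs t)
  | 0 => Measure.dirac PUnit.unit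
  | t + 1 => (Pmes q t).bind (fun ω => ((q t) ω).map (fun y => ((ω, y) : Hist Ωs (t + 1))))

/-- The positive part of an extended real, as an element of `[0,∞]`. -/
def ePos (x : EReal) : ℝ≥0∞ := if x = ⊤ then ⊤ else ENNReal.ofReal x.toReal

/-- The generalised integral `∫ f dμ := ∫ f⁺ dμ − ∫ f⁻ dμ` of an extended-real valued
function, with values in `ℝ ∪ {±∞}`. -/
def geint {α : Type*} [MeasurableSpace α] (μ : Measure α) (f : α → EReal) : EReal :=
  ((∫⁻ a, ePos (f a) ∂μ : ℝ≥0∞) : EReal) - ((∫⁻ a, ePos (-f a) ∂μ : ℝ≥0∞) : EReal)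

/-- The price increment `ΔS_{t+1}(ω^t, ω_{t+1}) = S_{t+1}(ω^t,ω_{t+1}) − S_t(ω^t)`. -/
def deltaS (S : ∀ t, Hist Ωs t → Evec d) (t : ℕ) (ω : Hist Ωs t) (y : Ωs (t + 1)) : Evec d :=
  S (t + 1) ((ω, y) : Hist Ωs (t + 1)) - S t ω

/-- The wealth process `V_t^{x,φ} = x + Σ_{s=1}^t φ_s · ΔS_s` (here `φ t` is the paper's
`φ_{t+1}`, the holding over the period `(t, t+1]`). -/
def Vval (S : ∀ t, Hist Ωs t → Evec d) (φ : ∀ t, Hist Ωs t → Evec d) (x : ℝ) :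
    ∀ t, Hist Ωs t → ℝ
  | 0 => fun _ => x
  | t + 1 => fun ω => Vval S φ x t ω.1 + ⟪φ t ω.1, deltaS S t ω.1 ω.2⟫_ℝ

/-- `Φ(x)`: predictable strategies with `V_T^{x,φ} ≥ 0` `P`-a.s. -/
def PhiX (q : ∀ t, Kernel (Hist Ωs t) (Ωs (t + 1))) (S : ∀ t, Hist Ωs t → Evec d)
    (T : ℕ) (x : ℝ) : Set (∀ t, Hist Ωs t → Evec d) :=
  {φ | (∀ t, Measurable (φ t)) ∧ ∀ᵐ ω ∂(Pmes q T), 0 ≤ Vval S φ x T ω}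

/-- `Φ(U,x)`: strategies in `Φ(x)` for which `E U(·, V_T^{x,φ})` exists in the
generalised sense, i.e. `E U⁺ < ∞` or `E U⁻ < ∞`. -/
def PhiU (q : ∀ t, Kernel (Hist Ωs t) (Ωs (t + 1))) (S : ∀ t, Hist Ωs t → Evec d)
    (T : ℕ) (U : Hist Ωs T → ℝ → EReal) (x : ℝ) : Set (∀ t, Hist Ωs t → Evec d) :=
  {φ ∈ PhiX q S T x |
    (∫⁻ ω, ePos (U ω (Vval S φ x T ω)) ∂(Pmes q T) < ⊤) ∨
    (∫⁻ ω, ePos (-(U ω (Vval S φ x T ω))) ∂(Pmes q T) < ⊤)}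

theorem ePos_eq_toENNReal (x : EReal) : ePos x = x.toENNReal := rfl

/-- Wealth is affine in the strategy: scaling `φ` by `c` scales the trading gains by `c`, whatever
the initial capitals `x` and `y`. -/
theorem Vval_smul (S φ : ∀ t, Hist Ωs t → Evec d) (c x y : ℝ) (t : ℕ) (ω : Hist Ωs t) :
    Vval S (fun s η => c • φ s η) y t ω = y + c * (Vval S φ x t ω - x) := by
  induction t with
  | zero => simp [Vval]
  | succ t ih =>
    simp only [Vval, ih, real_inner_smul_left]
    ring

/-- Assume (A1) `E U⁺(·, V_T^{1,φ}) < ∞` for all `φ ∈ Φ(U,1)`,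
(A2) `Φ(U,1) = Φ(1)`, and (A3) asymptotic elasticity. Then for every `x ≥ 0` and every
`φ ∈ Φ(x)` one has `E U⁺(·, V_T^{x,φ}) < ∞`; in particular `Φ(U,x) = Φ(x)`. -/
theorem positive_part_finite_for_all_strategies
    (q : ∀ t, Kernel (Hist Ωs t) (Ωs (t + 1))) [∀ t, IsMarkovKernel (q t)]
    (S : ∀ t, Hist Ωs t → Evec d) (hS : ∀ t, Measurable (S t)) (T : ℕ)
    (U : Hist Ωs T → ℝ → EReal)
    (hUmeas : ∀ x : ℝ, Measurable fun ω => U ω x)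
    (hUmono : ∀ ω, Monotone (U ω))
    (hUusc : ∀ ω, UpperSemicontinuous (U ω))
    (hUneg : ∀ ω, ∀ x : ℝ, x < 0 → U ω x = ⊥)
    (γ K : ℝ) (hγ : 0 ≤ γ) (hK : 0 < K)
    (C : Hist Ωs T → ℝ) (hCmeas : Measurable C) (hC0 : ∀ ω, 0 ≤ C ω)
    (hCint : ∫⁻ ω, ENNReal.ofReal (C ω) ∂(Pmes q T) < ⊤)
    (hAE : ∀ ω, ∀ lam x : ℝ, 1 ≤ lam →
      U ω (lam * x) ≤ ((K * lam ^ γ : ℝ) : EReal) * (U ω (x + 1 / 2) + (C ω : EReal)))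
    (A1 : ∀ φ ∈ PhiU q S T U 1,
      ∫⁻ ω, ePos (U ω (Vval S φ 1 T ω)) ∂(Pmes q T) < ⊤)
    (A2 : PhiU q S T U 1 = PhiX q S T 1) :
    ∀ x : ℝ, 0 ≤ x →
      (∀ φ ∈ PhiX q S T x,
        ∫⁻ ω, ePos (U ω (Vval S φ x T ω)) ∂(Pmes q T) < ⊤) ∧
      PhiU q S T U x = PhiX q S T x := by
  intro x hx
  have key : ∀ φ ∈ PhiX q S T x,
      ∫⁻ ω, ePos (U ω (Vval S φ x T ω)) ∂(Pmes q T) < ⊤ := by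
    rintro φ ⟨hφm, hφ⟩
    set l : ℝ := 2 * x + 1 with hl
    have hl1 : 1 ≤ l := by linarith
    have hl0 : 0 < l := by linarith
    set ψ : ∀ t, Hist Ωs t → Evec d := fun t ω => l⁻¹ • φ t ω with hψ
    have hV : ∀ ω, l⁻¹ * Vval S φ x T ω + 1 / 2 ≤ Vval S ψ 1 T ω := by
      intro ω
      rw [hψ, Vval_smul S φ l⁻¹ x 1 T ω]
      have : l⁻¹ * x ≤ 1 / 2 := by
        rw [inv_mul_le_iff₀ hl0]
        linarith
      linarith [mul_sub l⁻¹ (Vval S φ x T ω) x]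
    have hψmem : ψ ∈ PhiX q S T 1 := by
      refine ⟨fun t => (hφm t).const_smul l⁻¹, ?_⟩
      filter_upwards [hφ] with ω hω
      have := mul_nonneg (inv_nonneg.2 hl0.le) hω
      linarith [hV ω]
    have hfin := A1 ψ (A2 ▸ hψmem)
    have hk0 : 0 ≤ K * l ^ γ := mul_nonneg hK.le (Real.rpow_nonneg hl0.le _)
    have hbound : ∀ ω, ePos (U ω (Vval S φ x T ω)) ≤
        ENNReal.ofReal (K * l ^ γ) *
          (ePos (U ω (Vval S ψ 1 T ω)) + ENNReal.ofReal (C ω)) := by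
      intro ω
      have h1 := hAE ω l (l⁻¹ * Vval S φ x T ω) hl1
      rw [mul_inv_cancel_left₀ hl0.ne'] at h1
      simp only [ePos_eq_toENNReal]
      refine (EReal.toENNReal_le_toENNReal h1).trans ?_
      rw [EReal.toENNReal_mul (by exact_mod_cast hk0), EReal.toENNReal_of_ne_top
        (EReal.coe_ne_top _), EReal.toReal_coe]
      gcongr
      refine EReal.toENNReal_add_le.trans ?_
      exact add_le_add (EReal.toENNReal_le_toENNReal (hUmono ω (hV ω))) le_rfl
    refine (lintegral_mono hbound).trans_lt ?_
    rw [lintegral_const_mul' _ _ ENNReal.ofReal_ne_top,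
      lintegral_add_right _ hCmeas.ennreal_ofReal]
    exact ENNReal.mul_lt_top ENNReal.ofReal_lt_top (ENNReal.add_lt_top.2 ⟨hfin, hCint⟩)
  exact ⟨key, Set.Subset.antisymm (fun φ h => h.1) fun φ h => ⟨h, Or.inl (key φ h)⟩⟩
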